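/- Let h : Σ₂* → Σ₂* be a morphism such that h(01) ≠ ε. Then the following statements are equivalent: (a) h is non-erasing and h(01101001) is 7/3-power-free; (b) there exists an integer k ≥ 0 such that h = μ^k or h = E ∘ μ^k; (c) h maps every infinite 7/3-power-free binary word to an infinite 7/3-power-free binary word; (d) there exists an infinite 7/3-power-free binary word whose image under h is 7/3-power-free. -/

import Mathlib

/-- The Thue–Morse morphism `μ` on a single letter (`false` = 0, `true` = 1):
`μ(0) = 01`, `μ(1) = 10`. -/
def muLetter : Bool → List Bool
  | false => [false, true]
  | true  => [true, false]

/-- The Thue–Morse morphism `μ` on binary words. -/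
def mu (w : List Bool) : List Bool := (w.map muLetter).flatten

/-- `z` is a `β`-power (for a rational `β`): `z = xⁿx'` with `x'` a prefix of `x`
and `n + |x'|/|x| = β`. -/
def IsPower (β : ℚ) (z : List Bool) : Prop :=
  ∃ (n : ℕ) (x x' : List Bool), x ≠ [] ∧ x' <+: x ∧
    z = (List.replicate n x).flatten ++ x' ∧
    (n : ℚ) + (x'.length : ℚ) / (x.length : ℚ) = β

/-- The finite word `w` is `α`-power-free: no subword (contiguous factor) of `w`
is a `β`-power for any rational `β ≥ α`. -/
def PowerFree (α : ℝ) (w : List Bool) : Prop :=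
  ∀ z : List Bool, z <:+: w → ∀ β : ℚ, α ≤ (β : ℝ) → ¬ IsPower β z

/-- The finite word `w` contains an `α`-power: some subword of `w` is a
`β`-power for some rational `β ≥ α`. -/
def ContainsPower (α : ℝ) (w : List Bool) : Prop :=
  ∃ z : List Bool, z <:+: w ∧ ∃ β : ℚ, α ≤ (β : ℝ) ∧ IsPower β z

/-- `z` is a (finite) subword of the infinite word `w : ℕ → Bool`. -/
def InfSubword (z : List Bool) (w : ℕ → Bool) : Prop :=
  ∃ i : ℕ, z = (List.range z.length).map fun k => w (i + k)

/-- The infinite word `w` is `α`-power-free. -/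
def PowerFreeInf (α : ℝ) (w : ℕ → Bool) : Prop :=
  ∀ z : List Bool, InfSubword z w → ∀ β : ℚ, α ≤ (β : ℝ) → ¬ IsPower β z

/-- The infinite word `w` contains an `α`-power. -/
def ContainsPowerInf (α : ℝ) (w : ℕ → Bool) : Prop :=
  ∃ z : List Bool, InfSubword z w ∧ ∃ β : ℚ, α ≤ (β : ℝ) ∧ IsPower β z

/-- The length-`n` prefix of an infinite word. -/
def wordPrefix (w : ℕ → Bool) (n : ℕ) : List Bool := (List.range n).map w

/-- `h : Σ₂* → Σ₂*` is a morphism. -/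
def IsMorphism (h : List Bool → List Bool) : Prop :=
  ∀ x y : List Bool, h (x ++ y) = h x ++ h y

/-- A morphism is non-erasing if it erases neither letter. -/
def NonErasing (h : List Bool → List Bool) : Prop :=
  h [false] ≠ [] ∧ h [true] ≠ []

/-- The infinite word `u` is the image of the infinite word `w` under the morphism `h`
(obtained by concatenating the images of the letters of `w`): every `h(w[0..n))` is a
prefix of `u`, and these prefixes exhaust `u`. -/
def IsMorphImage (h : List Bool → List Bool) (w u : ℕ → Bool) : Prop :=
  (∀ n : ℕ, wordPrefix u (h (wordPrefix w n)).length = h (wordPrefix w n)) ∧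
  ∀ m : ℕ, ∃ n : ℕ, m ≤ (h (wordPrefix w n)).length

/-- The complementation morphism `E` : `E(0) = 1`, `E(1) = 0`. -/
def eMorph (w : List Bool) : List Bool := w.map fun b => !b

/-- The Thue–Morse word `μ^ω(0)` (`tm n` = parity of the binary digit sum of `n`). -/
def tm (n : ℕ) : Bool := (Nat.digits 2 n).sum % 2 == 1

/-- `μ³(0) = 01101001`. -/
def w01101001 : List Bool := [false, true, true, false, true, false, false, true]

/-- `μ³(1) = 10010110`. -/
def w10010110 : List Bool := [true, false, false, true, false, true, true, false]

/-- The word `f` has a factor of exponent at least `7/3` inside positions `[a, N)`. -/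
def PB (f : ℕ → Bool) (a N : ℕ) : Prop :=
  ∃ i P L, a ≤ i ∧ 0 < P ∧ 7 * P ≤ 3 * L ∧ i + L ≤ N ∧ ∀ k, k + P < L → f (i + k) = f (i + k + P)

/-- Letter of a finite word, with default value. -/
def gd (w : List Bool) (n : ℕ) : Bool := w.getD n false

theorem gd_cons_succ (b : Bool) (w : List Bool) (n : ℕ) : gd (b :: w) (n + 1) = gd w n := by
  simp [gd]

theorem gd_cons_zero (b : Bool) (w : List Bool) : gd (b :: w) 0 = b := by
  simp [gd]

theorem gd_left (A B : List Bool) (n : ℕ) (hn : n < A.length) : gd (A ++ B) n = gd A n := by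
  simp [gd, List.getElem?_append, hn]

theorem gd_right (A B : List Bool) (n : ℕ) : gd (A ++ B) (A.length + n) = gd B n := by
  simp [gd, List.getElem?_append]

theorem gd_ext (A B : List Bool) (hl : A.length = B.length)
    (hg : ∀ n, n < A.length → gd A n = gd B n) : A = B := by
  apply List.ext_getElem hl
  intro n h1 h2
  have := hg n h1
  simpa [gd, h1, h2] using this

theorem gd_replicate_step (n : ℕ) (x x' : List Bool) (hx : x' <+: x) :
    ∀ k, k + x.length < n * x.length + x'.length →
      gd ((List.replicate n x).flatten ++ x') k =
      gd ((List.replicate n x).flatten ++ x') (k + x.length) := by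
  induction n with
  | zero =>
    intro k hk
    have := hx.length_le
    omega
  | succ n ih =>
    intro k hk
    have e : (List.replicate (n+1) x).flatten ++ x' =
      x ++ ((List.replicate n x).flatten ++ x') := by
      simp [List.replicate_succ]
    have hk2 : k < n * x.length + x'.length := by
      have : (n+1) * x.length = n * x.length + x.length := by ring
      omega
    rw [e, show k + x.length = x.length + k by ring, gd_right]
    by_cases h1 : k < x.length
    · rw [gd_left _ _ _ h1]
      cases n with
      | zero =>
        obtain ⟨t, rfl⟩ := hx
        simp only [List.replicate_zero, List.flatten_nil, List.nil_append]
        rw [gd_left]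
        simpa using hk2
      | succ m =>
        rw [show (List.replicate (m+1) x).flatten ++ x' =
          x ++ ((List.replicate m x).flatten ++ x') by simp [List.replicate_succ], gd_left _ _ _ h1]
    · obtain ⟨j, rfl⟩ := Nat.exists_eq_add_of_le (not_lt.mp h1)
      rw [gd_right, ih j (by omega), show x.length + j = j + x.length by ring]

theorem isPower_period (β : ℚ) (z : List Bool) (hz : IsPower β z) (hb : (7/3 : ℝ) ≤ (β : ℝ)) :
    ∃ P, 0 < P ∧ 7 * P ≤ 3 * z.length ∧ ∀ k, k + P < z.length → gd z k = gd z (k + P) := by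
  obtain ⟨n, x, x', hx, hp, rfl, hβ⟩ := hz
  have hx0 : 0 < x.length := List.length_pos_of_ne_nil hx
  have hl : ((List.replicate n x).flatten ++ x').length = n * x.length + x'.length := by simp
  refine ⟨x.length, hx0, ?_, ?_⟩
  · have hb' : (7/3 : ℚ) ≤ β := by
      have : ((7/3 : ℚ) : ℝ) ≤ (β : ℝ) := by push_cast; exact hb
      exact_mod_cast this
    rw [← hβ] at hb'
    have hx0' : (0 : ℚ) < x.length := by exact_mod_cast hx0
    have : (7 : ℚ) * x.length ≤ 3 * (n * x.length + x'.length) := by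
      have h2 := mul_le_mul_of_nonneg_right hb' hx0'.le
      rw [add_mul, div_mul_cancel₀ _ hx0'.ne'] at h2
      linarith
    rw [hl]
    exact_mod_cast this
  · rw [hl]
    exact gd_replicate_step n x x' hp

theorem period_isPower (z : List Bool) (P : ℕ) (hP : 0 < P) (hl : 7 * P ≤ 3 * z.length)
    (hper : ∀ k, k + P < z.length → gd z k = gd z (k + P)) :
    ∃ β : ℚ, (7/3 : ℝ) ≤ (β : ℝ) ∧ IsPower β z := by
  have hle : P ≤ z.length := by omega
  have hdm := Nat.div_add_mod z.length P
  have hmod := Nat.mod_lt z.length hP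
  set n := z.length / P
  set r := z.length % P
  have hxl : (z.take P).length = P := by simp [hle]
  have hxl' : (z.take r).length = r := by simp; omega
  have hpre : z.take r <+: z.take P := List.take_prefix_take_left (by omega)
  have hzl : z.length = n * P + r := by rw [mul_comm]; exact hdm.symm
  have hgt : ∀ m j, j < m → gd (z.take m) j = gd z j := by
    intro m j hj
    simp [gd, hj]
  refine ⟨(n : ℚ) + ((z.take r).length : ℚ) / ((z.take P).length : ℚ), ?_, n, z.take P, z.take r,
    ?_, hpre, ?_, rfl⟩
  · have hP' : (0 : ℚ) < P := by exact_mod_cast hP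
    have : (7/3 : ℚ) ≤ (n : ℚ) + ((z.take r).length : ℚ) / ((z.take P).length : ℚ) := by
      rw [hxl, hxl']
      have h7 : (7 : ℚ) * P ≤ 3 * (n * P + r) := by
        rw [hzl] at hl; exact_mod_cast hl
      rw [← sub_nonneg]
      have : (n : ℚ) + r / P - 7/3 = (3 * (n * P + r) - 7 * P) / (3 * P) := by
        field_simp
      rw [this]
      apply div_nonneg <;> linarith
    have h2 : ((7/3 : ℚ) : ℝ) ≤
      (((n : ℚ) + ((z.take r).length : ℚ) / ((z.take P).length : ℚ) : ℚ) : ℝ) := by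
      exact_mod_cast this
    refine le_trans (le_of_eq ?_) h2
    push_cast; rfl
  · intro h0
    rw [h0] at hxl
    simp at hxl; omega
  · apply gd_ext
    · simp only [List.length_append, List.length_flatten, List.map_replicate, List.sum_replicate,
        smul_eq_mul, hxl, hxl']
      exact hzl
    · intro j
      induction j using Nat.strong_induction_on with
      | _ j ih =>
        intro hj
        by_cases hjP : j < P
        · rcases Nat.eq_zero_or_pos n with h0 | h0
          · rw [h0] at hzl; omega
          · obtain ⟨m, hm⟩ := Nat.exists_eq_succ_of_ne_zero h0.ne'
            rw [hm, List.replicate_succ, List.flatten_cons, List.append_assoc, gd_left _ _ _ (by omega),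
              hgt _ _ hjP]
        · obtain ⟨i, rfl⟩ := Nat.exists_eq_add_of_le (not_lt.mp hjP)
          have h3 := gd_replicate_step n (z.take P) (z.take r) hpre i (by rw [hxl, hxl']; omega)
          rw [hxl] at h3
          rw [show P + i = i + P by ring, ← h3, ← ih i (by omega) (by omega),
            hper i (by omega)]

theorem gd_range_map (w : ℕ → Bool) (i n k : ℕ) (hk : k < n) :
    gd ((List.range n).map fun k => w (i + k)) k = w (i + k) := by
  simp [gd, hk]

theorem gd_wordPrefix (w : ℕ → Bool) (n k : ℕ) (hk : k < n) : gd (wordPrefix w n) k = w k := by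
  simp [gd, wordPrefix, hk]

theorem powerFree_not_PB (w : List Bool) (hw : PowerFree (7/3 : ℝ) w) : ¬ PB (gd w) 0 w.length := by
  rintro ⟨i, P, L, -, hP, hL, hiL, hper⟩
  have hlen : ((w.drop i).take L).length = L := by simp; omega
  have hg : ∀ k, k < L → gd ((w.drop i).take L) k = gd w (i + k) := by
    intro k hk
    simp [gd, hk]
  obtain ⟨β, hβ, hpow⟩ := period_isPower ((w.drop i).take L) P hP (by omega) (by
    intro k hk
    rw [hlen] at hk
    rw [hg _ (by omega), hg _ hk, ← add_assoc, hper k hk])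
  exact hw _ ((List.take_prefix _ _).isInfix.trans (List.drop_suffix _ _).isInfix) β hβ hpow

theorem not_PB_powerFree (w : List Bool) (hw : ¬ PB (gd w) 0 w.length) : PowerFree (7/3 : ℝ) w := by
  intro z hz β hβ hpow
  obtain ⟨P, hP, hL, hper⟩ := isPower_period β z hpow hβ
  obtain ⟨A, B, rfl⟩ := hz
  refine hw ⟨A.length, P, z.length, by omega, hP, hL, by simp, ?_⟩
  intro k hk
  rw [List.append_assoc, gd_right, gd_left _ _ _ (by omega), add_assoc, gd_right, gd_left _ _ _ hk,
    hper k hk]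

theorem powerFreeInf_iff (w : ℕ → Bool) : PowerFreeInf (7/3 : ℝ) w ↔ ∀ N, ¬ PB w 0 N := by
  constructor
  · rintro hw N ⟨i, P, L, -, hP, hL, hiL, hper⟩
    set z := (List.range L).map fun k => w (i + k) with hz
    have hlen : z.length = L := by simp [hz]
    obtain ⟨β, hβ, hpow⟩ := period_isPower z P hP (by omega) (by
      intro k hk
      rw [hlen] at hk
      rw [hz, gd_range_map _ _ _ _ (by omega), gd_range_map _ _ _ _ hk, ← add_assoc, hper k hk])
    exact hw z ⟨i, by rw [hlen]⟩ β hβ hpow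
  · intro hw z ⟨i, hz⟩ β hβ hpow
    obtain ⟨P, hP, hL, hper⟩ := isPower_period β z hpow hβ
    refine hw (i + z.length) ⟨i, P, z.length, by omega, hP, hL, le_refl _, ?_⟩
    intro k hk
    have h1 := hper k hk
    rw [hz] at h1
    rw [gd_range_map _ _ _ _ (by omega), gd_range_map _ _ _ _ hk, ← add_assoc] at h1
    exact h1

/-! The Thue–Morse map on infinite words. -/

/-- `μ` on infinite words. -/
def muInf (w : ℕ → Bool) (n : ℕ) : Bool := if n % 2 = 0 then w (n / 2) else !w (n / 2)

theorem muInf_even (w : ℕ → Bool) (n : ℕ) : muInf w (2 * n) = w n := by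
  simp [muInf]

theorem muInf_odd (w : ℕ → Bool) (n : ℕ) : muInf w (2 * n + 1) = !w n := by
  have : (2 * n + 1) / 2 = n := by omega
  simp [muInf, this, Nat.add_mod]

theorem muInf_ne (w : ℕ → Bool) (j : ℕ) (hj : j % 2 = 0) : muInf w j ≠ muInf w (j + 1) := by
  obtain ⟨n, rfl⟩ : ∃ n, j = 2 * n := ⟨j / 2, by omega⟩
  rw [muInf_even, muInf_odd]; simp

theorem muInf_power (w : ℕ → Bool) (i P L : ℕ) (hP : 0 < P) (hL : 7 * P ≤ 3 * L)
    (hper : ∀ k, k + P < L → muInf w (i + k) = muInf w (i + k + P)) :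
    ∃ i' P' L', P = 2 * P' ∧ 7 * P' ≤ 3 * L' ∧
      ∀ k, k + P' < L' → w (i' + k) = w (i' + k + P') := by
  rcases Nat.even_or_odd' P with ⟨P', rfl | rfl⟩
  · refine ⟨i / 2, P', (i + L - 1) / 2 - i / 2 + 1, rfl, by omega, ?_⟩
    intro k hk
    have key : ∀ m, i ≤ m → m + 2 * P' < i + L → w (m / 2) = w (m / 2 + P') := by
      intro m h1 h2
      have h3 := hper (m - i) (by omega)
      rw [show i + (m - i) = m by omega] at h3
      have h4 : (m + 2 * P') % 2 = m % 2 := by omega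
      have h5 : (m + 2 * P') / 2 = m / 2 + P' := by omega
      unfold muInf at h3
      rw [h4, h5] at h3
      split_ifs at h3
      · exact h3
      · simpa using h3
    by_cases hk0 : k = 0
    · subst hk0
      exact key i (by omega) (by omega)
    · have := key (2 * (i / 2 + k)) (by omega) (by omega)
      rwa [show 2 * (i / 2 + k) / 2 = i / 2 + k by omega] at this
  · exfalso
    set Q := 2 * P' + 1 with hQ
    have alt : ∀ k, k + 1 + Q < L → muInf w (i + k) ≠ muInf w (i + k + 1) := by
      intro k hk
      by_cases he : (i + k) % 2 = 0
      · exact muInf_ne w _ he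
      · have h1 := muInf_ne w (i + k + Q) (by omega)
        rw [← hper k (by omega), show i + k + Q + 1 = i + (k + 1) + Q by ring, ← hper (k+1) hk] at h1
        exact h1
    have alt2 : ∀ m, 2 * m + 1 + Q < L → muInf w i ≠ muInf w (i + (2 * m + 1)) := by
      intro m
      induction m with
      | zero => intro hm; exact alt 0 (by omega)
      | succ m ih =>
        intro hm
        have h1 := ih (by omega)
        have h2 := alt (2 * m + 1) (by omega)
        have h3 := alt (2 * m + 2) (by omega)
        rw [show i + (2 * (m + 1) + 1) = i + (2 * m + 2) + 1 by ring]
        rw [show i + (2 * m + 1) + 1 = i + (2 * m + 2) by ring] at h2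
        revert h1 h2 h3
        generalize muInf w i = a
        generalize muInf w (i + (2 * m + 1)) = b
        generalize muInf w (i + (2 * m + 2)) = c
        generalize muInf w (i + (2 * m + 2) + 1) = d
        revert a b c d; decide
    exact alt2 P' (by omega) (hper 0 (by omega))

theorem muInf_free (w : ℕ → Bool) (hw : ∀ N, ¬ PB w 0 N) : ∀ N, ¬ PB (muInf w) 0 N := by
  rintro N ⟨i, P, L, -, hP, hL, -, hper⟩
  obtain ⟨i', P', L', h1, h2, h3⟩ := muInf_power w i P L hP hL hper
  exact hw (i' + L') ⟨i', P', L', by omega, by omega, h2, le_refl _, h3⟩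

theorem tm_muInf : muInf tm = tm := by
  funext n
  rcases Nat.even_or_odd' n with ⟨m, rfl | rfl⟩
  · rw [muInf_even]
    rcases Nat.eq_zero_or_pos m with rfl | hm
    · rfl
    · unfold tm
      rw [Nat.digits_def' (by norm_num) (by omega : 0 < 2 * m)]
      simp
  · rw [muInf_odd]
    unfold tm
    rw [Nat.digits_def' (by norm_num) (by omega : 0 < 2 * m + 1)]
    have h1 : (2 * m + 1) / 2 = m := by omega
    have h2 : (2 * m + 1) % 2 = 1 := by omega
    rw [h1, h2, List.sum_cons]
    generalize (Nat.digits 2 m).sum = s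
    rcases Nat.mod_two_eq_zero_or_one s with h | h <;> simp [Nat.add_mod, h]

theorem tm_free : ∀ N, ¬ PB tm 0 N := by
  have key : ∀ P, 0 < P → ∀ i L, 7 * P ≤ 3 * L →
      ¬ ∀ k, k + P < L → tm (i + k) = tm (i + k + P) := by
    intro P
    induction P using Nat.strong_induction_on with
    | _ P ih =>
      intro hP i L hL hper
      rw [← tm_muInf] at hper
      obtain ⟨i', P', L', h1, h2, h3⟩ := muInf_power tm i P L hP hL hper
      exact ih P' (by omega) (by omega) i' L' h2 h3
  rintro N ⟨i, P, L, -, hP, hL, -, hper⟩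
  exact key P hP i L hL hper

/-! Finite words and `μ`. -/

theorem mu_nil : mu [] = [] := rfl

theorem mu_cons (b : Bool) (t : List Bool) : mu (b :: t) = b :: (!b) :: mu t := by
  cases b <;> simp [mu, muLetter]

theorem mu_append (s t : List Bool) : mu (s ++ t) = mu s ++ mu t := by
  simp [mu]

theorem mu_length (t : List Bool) : (mu t).length = 2 * t.length := by
  induction t with
  | nil => rfl
  | cons b t ih => rw [mu_cons]; simp only [List.length_cons, ih]; ring

theorem gd_mu_even (t : List Bool) : ∀ n, gd (mu t) (2 * n) = gd t n := by
  induction t with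
  | nil => intro n; simp [gd, mu_nil]
  | cons b t ih =>
    intro n
    rw [mu_cons]
    cases n with
    | zero => simp [gd]
    | succ n => rw [show 2 * (n + 1) = 2 * n + 1 + 1 by ring, gd_cons_succ, gd_cons_succ, ih, gd_cons_succ]

theorem gd_mu_odd (t : List Bool) : ∀ n, n < t.length → gd (mu t) (2 * n + 1) = !gd t n := by
  induction t with
  | nil => intro n hn; simp at hn
  | cons b t ih =>
    intro n hn
    rw [mu_cons]
    cases n with
    | zero => simp [gd]
    | succ n =>
      rw [show 2 * (n + 1) = 2 * n + 1 + 1 by ring, gd_cons_succ, gd_cons_succ, ih, gd_cons_succ]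
      simpa using hn

theorem mu_of_pairs : ∀ (m : ℕ) (s : List Bool), s.length = 2 * m →
    (∀ i, i < m → gd s (2 * i) ≠ gd s (2 * i + 1)) → ∃ t, s = mu t
  | 0, s, hs, _ => ⟨[], by simpa [mu_nil] using hs⟩
  | m + 1, [], hs, _ => by simp at hs
  | m + 1, [a], hs, _ => by simp at hs; omega
  | m + 1, a :: b :: s, hs, hp => by
    obtain ⟨t, ht⟩ := mu_of_pairs m s (by simp at hs; omega) (by
      intro i hi
      have := hp (i + 1) (by omega)
      rwa [show 2 * (i + 1) = 2 * i + 1 + 1 by ring, gd_cons_succ, gd_cons_succ, gd_cons_succ,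
        gd_cons_succ] at this)
    refine ⟨a :: t, ?_⟩
    have h0 := hp 0 (by omega)
    rw [mu_cons, ← ht]
    simp only [gd, mul_zero, List.getD_cons_zero, zero_add, List.getD_cons_succ] at h0
    cases a <;> cases b <;> simp_all

/-- `h(01101001)` in terms of the images of the letters. -/
def bigW (x y : List Bool) : List Bool := x ++ (y ++ (y ++ (x ++ (y ++ (x ++ (x ++ y))))))

theorem bigW_mu (x y : List Bool) : bigW (mu x) (mu y) = mu (bigW x y) := by
  simp [bigW, mu_append]

theorem bigW_length (x y : List Bool) : (bigW x y).length = 4 * x.length + 4 * y.length := by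
  simp [bigW]; ring

theorem pair_step (f : ℕ → Bool) (a N : ℕ) (hf : ¬ PB f a N) :
    ∀ d i j, a + 1 ≤ i → j = i + d → j + 3 ≤ N → f i = f (i + 1) → f j = f (j + 1) → d % 2 = 0 := by
  intro d
  induction d using Nat.strong_induction_on with
  | _ d ih =>
    intro i j hi hj hN h0 hj0
    by_cases hd0 : d = 0
    · omega
    have n1 : f (i + 1) ≠ f (i + 2) := by
      intro h1
      apply hf
      refine ⟨i, 1, 3, by omega, by omega, by omega, by omega, ?_⟩
      intro k hk
      obtain rfl | rfl : k = 0 ∨ k = 1 := by omega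
      · exact h0
      · exact h1
    have hd1 : d ≠ 1 := by
      rintro rfl
      subst hj
      exact n1 hj0
    by_cases h2 : f (i + 2) = f (i + 3)
    · have := ih (d - 2) (by omega) (i + 2) j (by omega) (by omega) hN h2 hj0
      omega
    have hd2 : d ≠ 2 := by
      rintro rfl
      subst hj
      exact h2 hj0
    have hN4 : i + 6 ≤ N := by omega
    obtain ⟨i0, rfl⟩ : ∃ i0, i = i0 + 1 := ⟨i - 1, by omega⟩
    simp only [add_assoc, Nat.reduceAdd] at *
    have n0 : f i0 ≠ f (i0 + 1) := by
      intro h1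
      apply hf
      refine ⟨i0, 1, 3, by omega, by omega, by omega, by omega, ?_⟩
      intro k hk
      obtain rfl | rfl : k = 0 ∨ k = 1 := by omega
      · exact h1
      · exact h0
    have n3 : f (i0 + 4) ≠ f (i0 + 5) := by
      intro h3
      have n4 : f (i0 + 5) ≠ f (i0 + 6) := by
        intro h4
        apply hf
        refine ⟨i0 + 4, 1, 3, by omega, by omega, by omega, by omega, ?_⟩
        intro k hk
        obtain rfl | rfl : k = 0 ∨ k = 1 := by omega
        · exact h3
        · exact h4
      apply hf
      refine ⟨i0, 3, 7, by omega, by omega, by omega, by omega, ?_⟩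
      intro k hk
      have hk4 : k < 4 := by omega
      clear ih hf hj0 hN hd0 hd1 hd2 hi hj hN4
      revert n0 h0 n1 h2 h3 n4
      interval_cases k <;> simp only [add_assoc, Nat.reduceAdd, add_zero] <;>
        cases f i0 <;> cases f (i0+1) <;> cases f (i0+2) <;> cases f (i0+3) <;>
        cases f (i0+4) <;> cases f (i0+5) <;> cases f (i0+6) <;> simp
    have hd3 : d ≠ 3 := by
      rintro rfl
      subst hj
      apply n3
      have e1 : i0 + (1 + 3) = i0 + 4 := by ring
      have e2 : i0 + (1 + 4) = i0 + 5 := by ring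
      simpa only [e1, e2] using hj0
    by_cases h4 : f (i0 + 5) = f (i0 + 6)
    · have := ih (d - 4) (by omega) (i0 + 5) j (by omega) (by omega) hN h4 hj0
      omega
    exfalso
    apply hf
    refine ⟨i0 + 2, 2, 5, by omega, by omega, by omega, by omega, ?_⟩
    intro k hk
    have hk3 : k < 3 := by omega
    clear ih hf hj0
    interval_cases k <;> simp only [add_assoc, Nat.reduceAdd, add_zero] <;> revert n1 h2 n3 h4 <;>
      generalize f (i0+2) = b2 <;>
      generalize f (i0+3) = b3 <;> generalize f (i0+4) = b4 <;> generalize f (i0+5) = b5 <;>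
      generalize f (i0+6) = b6 <;> revert b2 b3 b4 b5 b6 <;> decide

theorem pair_parity (f : ℕ → Bool) (a N : ℕ) (hf : ¬ PB f a N) (i j : ℕ) (hi : a + 1 ≤ i)
    (hj : a + 1 ≤ j) (hiN : i + 3 ≤ N) (hjN : j + 3 ≤ N)
    (h1 : f i = f (i + 1)) (h2 : f j = f (j + 1)) : i % 2 = j % 2 := by
  rcases le_total i j with h | h
  · have := pair_step f a N hf (j - i) i j hi (by omega) hjN h1 h2
    omega
  · have := pair_step f a N hf (i - j) j i hj (by omega) hiN h2 h1
    omega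

theorem five_pair (f : ℕ → Bool) (a N i : ℕ) (hf : ¬ PB f a N) (hi : a ≤ i) (hN : i + 5 ≤ N) :
    ∃ j, j < 4 ∧ f (i + j) = f (i + j + 1) := by
  by_contra hcon
  push Not at hcon
  apply hf
  refine ⟨i, 2, 5, by omega, by omega, by omega, by omega, ?_⟩
  intro k hk
  have a1 := hcon k (by omega)
  have a2 := hcon (k + 1) (by omega)
  rw [show i + (k + 1) = i + k + 1 by ring] at a2
  revert a1 a2
  rw [show i + k + 1 + 1 = i + k + 2 by ring]
  generalize f (i + k) = b0
  generalize f (i + k + 1) = b1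
  generalize f (i + k + 2) = b2
  revert b0 b1 b2; decide

/-! Decidable searches. -/

/-- Do the two words have length at least `n` and agree on the first `n` letters? -/
def agree : ℕ → List Bool → List Bool → Bool
  | 0, _, _ => true
  | n + 1, true :: l, true :: l' => agree n l l'
  | n + 1, false :: l, false :: l' => agree n l l'
  | _ + 1, _, _ => false

/-- Auxiliary search over periods. -/
def pfxAux (w : List Bool) : ℕ → List Bool → Bool
  | _, [] => false
  | P, _ :: t => agree ((4 * (P + 1) + 2) / 3) w t || pfxAux w (P + 1) t

/-- Does `w` have a prefix of exponent at least `7/3`? -/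
def pfx (w : List Bool) : Bool := pfxAux w 0 w

theorem agree_sound : ∀ (n : ℕ) (l l' : List Bool), agree n l l' = true →
    n ≤ l'.length ∧ ∀ k, k < n → gd l k = gd l' k
  | 0, _, _, _ => ⟨by omega, by intro k hk; omega⟩
  | n + 1, true :: l, true :: l', h => by
    obtain ⟨h1, h2⟩ := agree_sound n l l' h
    refine ⟨by simpa using h1, ?_⟩
    intro k hk
    cases k with
    | zero => rfl
    | succ k => rw [gd_cons_succ, gd_cons_succ]; exact h2 k (by omega)
  | n + 1, false :: l, false :: l', h => by
    obtain ⟨h1, h2⟩ := agree_sound n l l' h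
    refine ⟨by simpa using h1, ?_⟩
    intro k hk
    cases k with
    | zero => rfl
    | succ k => rw [gd_cons_succ, gd_cons_succ]; exact h2 k (by omega)
  | n + 1, [], _, h => by simp [agree] at h
  | n + 1, true :: _, [], h => by simp [agree] at h
  | n + 1, false :: _, [], h => by simp [agree] at h
  | n + 1, true :: _, false :: _, h => by simp [agree] at h
  | n + 1, false :: _, true :: _, h => by simp [agree] at h

theorem pfxAux_sound (w t : List Bool) : ∀ P A, A.length = P → w = A ++ t → pfxAux w P t = true →
    ∃ P L, 0 < P ∧ 7 * P ≤ 3 * L ∧ L ≤ w.length ∧ ∀ k, k + P < L → gd w k = gd w (k + P) := by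
  induction t with
  | nil => intro P A _ _ h; simp [pfxAux] at h
  | cons b t ih =>
    intro P A hA hw h
    rw [pfxAux, Bool.or_eq_true] at h
    rcases h with h | h
    · obtain ⟨h1, h2⟩ := agree_sound _ _ _ h
      have hl := congrArg List.length hw
      rw [List.length_append, List.length_cons] at hl
      refine ⟨P + 1, P + 1 + (4 * (P + 1) + 2) / 3, by omega, by omega, by omega, ?_⟩
      intro k hk
      rw [h2 k (by omega)]
      conv_rhs => rw [hw, show k + (P + 1) = A.length + (k + 1) by omega, gd_right, gd_cons_succ]
    · exact ih (P + 1) (A ++ [b]) (by simp [hA]) (by rw [hw]; simp) h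

/-- Does `w` have a factor of exponent at least `7/3`? -/
def hasPow : List Bool → Bool
  | [] => false
  | a :: l => pfx (a :: l) || hasPow l

theorem pfx_sound (w : List Bool) (hw : pfx w = true) :
    ∃ P L, 0 < P ∧ 7 * P ≤ 3 * L ∧ L ≤ w.length ∧ ∀ k, k + P < L → gd w k = gd w (k + P) :=
  pfxAux_sound w w 0 [] rfl rfl hw

theorem hasPow_sound (w : List Bool) (hw : hasPow w = true) : PB (gd w) 0 w.length := by
  induction w with
  | nil => simp [hasPow] at hw
  | cons a l ih =>
    simp only [hasPow, Bool.or_eq_true] at hw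
    rcases hw with hw | hw
    · obtain ⟨P, L, h1, h2, h3, h4⟩ := pfx_sound _ hw
      exact ⟨0, P, L, le_refl _, h1, h2, by omega, by simpa using h4⟩
    · obtain ⟨i, P, L, h0, h1, h2, h3, h4⟩ := ih hw
      refine ⟨i + 1, P, L, by omega, h1, h2, by simp; omega, ?_⟩
      intro k hk
      rw [show i + 1 + k = i + k + 1 by ring, gd_cons_succ, show i + k + 1 + P = i + k + P + 1 by ring,
        gd_cons_succ]
      exact h4 k hk

/-- All binary words of length `n`. -/
def wordsOf : ℕ → List (List Bool)
  | 0 => [[]]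
  | n + 1 => (wordsOf n).map (false :: ·) ++ (wordsOf n).map (true :: ·)

theorem mem_wordsOf (w : List Bool) : w ∈ wordsOf w.length := by
  induction w with
  | nil => simp [wordsOf]
  | cons a l ih => cases a <;> simp [wordsOf, ih]

/-- All nonempty words of length at most five. -/
def shortWords : List (List Bool) :=
  wordsOf 1 ++ wordsOf 2 ++ wordsOf 3 ++ wordsOf 4 ++ wordsOf 5

theorem mem_shortWords (w : List Bool) (h0 : w ≠ []) (h5 : w.length ≤ 5) : w ∈ shortWords := by
  have h1 : 0 < w.length := List.length_pos_of_ne_nil h0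
  have hm := mem_wordsOf w
  simp only [shortWords, List.mem_append]
  obtain h | h | h | h | h : w.length = 1 ∨ w.length = 2 ∨ w.length = 3 ∨ w.length = 4 ∨
    w.length = 5 := by omega
  all_goals rw [h] at hm; tauto

/-- The pairs of short words that survive. -/
def okPair (x y : List Bool) : Bool :=
  (x == [false] && y == [true]) || (y == [false] && x == [true]) ||
  (x == mu [false] && y == mu [true]) || (y == mu [false] && x == mu [true]) ||
  (x == mu (mu [false]) && y == mu (mu [true])) || (y == mu (mu [false]) && x == mu (mu [true]))

theorem short_check : (shortWords.all fun x => hasPow (x ++ x) ||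
    shortWords.all fun y => hasPow (y ++ y) || (hasPow (x ++ (x ++ y)) || (hasPow (y ++ (y ++ x)) ||
    (hasPow (bigW x y).tail || okPair x y)))) = true := by
  decide +kernel

theorem hasPow_mid (w A z B : List Bool) (hw : w = A ++ (z ++ B)) (hA : A ≠ []) (hz : hasPow z = true) :
    PB (gd w) 1 w.length := by
  obtain ⟨i, P, L, h0, h1, h2, h3, h4⟩ := hasPow_sound z hz
  have hA0 : 0 < A.length := List.length_pos_of_ne_nil hA
  subst hw
  refine ⟨A.length + i, P, L, by omega, h1, h2, by simp only [List.length_append]; omega, ?_⟩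
  intro k hk
  rw [add_assoc, add_assoc, gd_right, gd_right, gd_left _ _ _ (by omega), gd_left _ _ _ (by omega)]
  exact h4 k hk

/-- Leftward search for `01101001`. -/
def chk : ℕ → List Bool → Bool
  | 0, l => w01101001.isPrefixOf l || pfx l
  | n + 1, l => w01101001.isPrefixOf l || pfx l || (chk n (false :: l) && chk n (true :: l))

theorem chk_true : chk 23 [] = true := by
  decide +kernel

theorem chk_found (w : ℕ → Bool) (i : ℕ) (l : List Bool)
    (hl : ∀ k, k < l.length → gd l k = w (i + k)) (h1 : w01101001.isPrefixOf l = true) :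
    ∃ i, ∀ k, k < 8 → w (i + k) = gd w01101001 k := by
  rw [List.isPrefixOf_iff_prefix] at h1
  obtain ⟨t, rfl⟩ := h1
  refine ⟨i, ?_⟩
  intro k hk
  rw [← hl k (by simp [w01101001]; omega), gd_left _ _ _ (by simpa [w01101001] using hk)]

theorem chk_pfx (w : ℕ → Bool) (hw : ∀ N, ¬ PB w 0 N) (i : ℕ) (l : List Bool)
    (hl : ∀ k, k < l.length → gd l k = w (i + k)) (h1 : pfx l = true) : False := by
  obtain ⟨P, L, h1, h2, h3, h4⟩ := pfx_sound _ h1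
  refine hw (i + L) ⟨i, P, L, by omega, h1, h2, le_refl _, ?_⟩
  intro k hk
  rw [← hl k (by omega), add_assoc, ← hl (k + P) (by omega)]
  exact h4 k hk

theorem chk_sound (w : ℕ → Bool) (hw : ∀ N, ¬ PB w 0 N) : ∀ (i : ℕ) (l : List Bool),
    (∀ k, k < l.length → gd l k = w (i + k)) → chk i l = true →
    ∃ i, ∀ k, k < 8 → w (i + k) = gd w01101001 k := by
  intro i
  induction i with
  | zero =>
    intro l hl hc
    simp only [chk, Bool.or_eq_true] at hc
    rcases hc with hc | hc
    · exact chk_found w 0 l hl hc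
    · exact (chk_pfx w hw 0 l hl hc).elim
  | succ i ih =>
    intro l hl hc
    simp only [chk, Bool.or_eq_true, Bool.and_eq_true] at hc
    rcases hc with (hc | hc) | ⟨hf, ht⟩
    · exact chk_found w _ l hl hc
    · exact (chk_pfx w hw _ l hl hc).elim
    · have key : chk i (w i :: l) = true := by
        cases w i
        · exact hf
        · exact ht
      refine ih (w i :: l) ?_ key
      intro k hk
      cases k with
      | zero => simp [gd]
      | succ k =>
        rw [gd_cons_succ, hl k (by simpa using hk)]
        congr 1; ring

theorem bigW_facts (x y : List Bool) :
    (∀ o, o < x.length → gd (bigW x y) (x.length + 2 * y.length + o) = gd x o) ∧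
    (∀ o, o < x.length → gd (bigW x y) (2 * x.length + 3 * y.length + o) = gd x o) ∧
    (∀ o, o < x.length → gd (bigW x y) (3 * x.length + 3 * y.length + o) = gd x o) ∧
    (∀ o, o < y.length → gd (bigW x y) (x.length + o) = gd y o) ∧
    (∀ o, o < y.length → gd (bigW x y) (x.length + y.length + o) = gd y o) ∧
    (∀ o, o < y.length → gd (bigW x y) (2 * x.length + 2 * y.length + o) = gd y o) ∧
    (∀ o, o < y.length → gd (bigW x y) (4 * x.length + 3 * y.length + o) = gd y o) := by
  refine ⟨?_, ?_, ?_, ?_, ?_, ?_, ?_⟩ <;> intro o ho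
  · rw [show x.length + 2 * y.length + o = x.length + (y.length + (y.length + o)) by ring]
    simp only [bigW, gd_right, gd_left _ _ _ ho]
  · rw [show 2 * x.length + 3 * y.length + o =
      x.length + (y.length + (y.length + (x.length + (y.length + o)))) by ring]
    simp only [bigW, gd_right, gd_left _ _ _ ho]
  · rw [show 3 * x.length + 3 * y.length + o =
      x.length + (y.length + (y.length + (x.length + (y.length + (x.length + o))))) by ring]
    simp only [bigW, gd_right, gd_left _ _ _ ho]
  · simp only [bigW, gd_right, gd_left _ _ _ ho]
  · rw [show x.length + y.length + o = x.length + (y.length + o) by ring]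
    simp only [bigW, gd_right, gd_left _ _ _ ho]
  · rw [show 2 * x.length + 2 * y.length + o =
      x.length + (y.length + (y.length + (x.length + o))) by ring]
    simp only [bigW, gd_right, gd_left _ _ _ ho]
  · rw [show 4 * x.length + 3 * y.length + o =
      x.length + (y.length + (y.length + (x.length + (y.length + (x.length + (x.length + o)))))) by ring]
    simp only [bigW, gd_right]

/-- If one of the words is long, both have even length, and the interior squares `aa`
start at positions of one fixed parity. -/
theorem long_even (x y : List Bool) (hx : x ≠ []) (hy : y ≠ [])
    (hlong : 6 ≤ x.length ∨ 6 ≤ y.length)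
    (hW : ¬ PB (gd (bigW x y)) 1 (bigW x y).length) :
    x.length % 2 = 0 ∧ y.length % 2 = 0 ∧ ∃ e, e < 2 ∧ ∀ i, 2 ≤ i →
      i + 3 ≤ 4 * x.length + 4 * y.length → i % 2 = e →
      gd (bigW x y) i ≠ gd (bigW x y) (i + 1) := by
  have hx0 : 0 < x.length := List.length_pos_of_ne_nil hx
  have hy0 : 0 < y.length := List.length_pos_of_ne_nil hy
  obtain ⟨X1, X2, X3, Y1, Y2, Y3, Y4⟩ := bigW_facts x y
  have hN := bigW_length x y
  rw [hN] at hW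
  have par := pair_parity _ _ _ hW
  have fin : ∀ m, 2 ≤ m → m + 3 ≤ 4 * x.length + 4 * y.length →
      gd (bigW x y) m = gd (bigW x y) (m + 1) → ∃ e, e < 2 ∧ ∀ i, 2 ≤ i →
      i + 3 ≤ 4 * x.length + 4 * y.length → i % 2 = e →
      gd (bigW x y) i ≠ gd (bigW x y) (i + 1) := by
    intro m h1 h2 h3
    refine ⟨(m + 1) % 2, by omega, ?_⟩
    intro i hi1 hi2 hi3 hi4
    have := par i m hi1 h1 hi2 h2 hi4 h3
    omega
  rcases hlong with hl | hl
  · obtain ⟨j, hj, hp⟩ := five_pair _ _ _ (2 * x.length + 3 * y.length) hW (by omega) (by omega)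
    have hp' := hp
    rw [X2 j (by omega), add_assoc, X2 (j + 1) (by omega)] at hp'
    have a1 := par (2 * x.length + 3 * y.length + j) (3 * x.length + 3 * y.length + j)
      (by omega) (by omega) (by omega) (by omega) hp
      (by rw [X3 j (by omega), add_assoc, X3 (j + 1) (by omega), hp'])
    have a2 := par (2 * x.length + 3 * y.length + j) (x.length + 2 * y.length + j)
      (by omega) (by omega) (by omega) (by omega) hp
      (by rw [X1 j (by omega), add_assoc, X1 (j + 1) (by omega), hp'])
    exact ⟨by omega, by omega, fin _ (by omega) (by omega) hp⟩
  · obtain ⟨j, hj, hp⟩ := five_pair _ _ _ (x.length + y.length + 1) hW (by omega) (by omega)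
    rw [show x.length + y.length + 1 + j = x.length + y.length + (1 + j) by ring] at hp
    have hp' := hp
    rw [Y2 (1 + j) (by omega), add_assoc, Y2 (1 + j + 1) (by omega)] at hp'
    have a1 := par (x.length + y.length + (1 + j)) (x.length + (1 + j))
      (by omega) (by omega) (by omega) (by omega) hp
      (by rw [Y1 (1 + j) (by omega), add_assoc, Y1 (1 + j + 1) (by omega), hp'])
    have a2 := par (x.length + y.length + (1 + j)) (2 * x.length + 2 * y.length + (1 + j))
      (by omega) (by omega) (by omega) (by omega) hp
      (by rw [Y3 (1 + j) (by omega), add_assoc, Y3 (1 + j + 1) (by omega), hp'])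
    exact ⟨by omega, by omega, fin _ (by omega) (by omega) hp⟩

theorem gd_iter_zero (k : ℕ) (b : Bool) : ∃ t, mu^[k] [b] = b :: t := by
  induction k with
  | zero => exact ⟨[], rfl⟩
  | succ k ih =>
    obtain ⟨t, ht⟩ := ih
    exact ⟨(!b) :: mu t, by rw [Function.iterate_succ_apply', ht, mu_cons]⟩

/-- A power in `t` gives a power in `μ(t)`. -/
theorem PB_mu (t : List Bool) (f : ℕ → Bool) (a : ℕ) (N : ℕ) (d : ℕ) (hd : d ≤ 1)
    (hN : 2 * t.length ≤ N + d)
    (hf : ∀ n, d ≤ n → n < 2 * t.length → f (n - d) = gd (mu t) n)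
    (ht : PB (gd t) (a + 1) t.length) : PB f (a + 1) N := by
  obtain ⟨i, P, L, h0, h1, h2, h3, h4⟩ := ht
  refine ⟨2 * i - d, 2 * P, 2 * L, by omega, by omega, by omega, by omega, ?_⟩
  intro k hk
  rw [show 2 * i - d + k = 2 * i + k - d by omega,
    show 2 * i + k - d + 2 * P = 2 * i + k + 2 * P - d by omega,
    hf _ (by omega) (by omega), hf _ (by omega) (by omega)]
  have h5 := h4 (k / 2) (by omega)
  rcases Nat.even_or_odd' k with ⟨m, rfl | rfl⟩
  · rw [show 2 * m / 2 = m by omega] at h5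
    rw [show 2 * i + 2 * m + 2 * P = 2 * (i + m + P) by ring,
      show 2 * i + 2 * m = 2 * (i + m) by ring, gd_mu_even, gd_mu_even, h5]
  · rw [show (2 * m + 1) / 2 = m by omega] at h5
    rw [show 2 * i + (2 * m + 1) + 2 * P = 2 * (i + m + P) + 1 by ring,
      show 2 * i + (2 * m + 1) = 2 * (i + m) + 1 by ring, gd_mu_odd _ _ (by omega),
      gd_mu_odd _ _ (by omega), h5]

/-- In the second parity case a conjugate of `x` is an image under `μ`. -/
theorem shifted (x : List Bool) (c : Bool) (m : ℕ) (hm : x.length = 2 * (m + 1))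
    (hfirst : gd x 0 ≠ c) (hlast : gd x (2 * m + 1) = c)
    (hin : ∀ o, o < m → gd x (2 * o + 1) ≠ gd x (2 * o + 2)) :
    ∃ t, c :: x = mu t ++ [c] ∧ t.length = m + 1 := by
  have hxn : x ≠ [] := by rintro rfl; simp at hm
  have hsplit : x = x.dropLast ++ [c] := by
    have h1 := List.dropLast_append_getLast hxn
    have h2 : x.getLast hxn = c := by
      rw [← hlast, List.getLast_eq_getElem]
      have e : x.length - 1 = 2 * m + 1 := by omega
      have e2 : 2 * m + 1 < x.length := by omega
      simp [gd, e, e2]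
    rw [h2] at h1
    exact h1.symm
  have hdl : x.dropLast.length = 2 * m + 1 := by simp [hm]; omega
  have hg : ∀ o, o < 2 * m + 1 → gd x.dropLast o = gd x o := by
    intro o ho
    conv_rhs => rw [hsplit]
    rw [gd_left _ _ _ (by omega)]
  obtain ⟨t, ht⟩ := mu_of_pairs (m + 1) (c :: x.dropLast) (by simp only [List.length_cons]; omega) (by
    intro i hi
    cases i with
    | zero =>
      rw [mul_zero, gd_cons_succ, gd_cons_zero, hg _ (by omega)]
      exact hfirst.symm
    | succ i =>
      rw [show 2 * (i + 1) = 2 * i + 1 + 1 by ring, gd_cons_succ, gd_cons_succ, hg _ (by omega),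
        hg _ (by omega)]
      exact hin i (by omega))
  refine ⟨t, ?_, ?_⟩
  · rw [← ht]
    conv_lhs => rw [hsplit]
    rfl
  · have := congrArg List.length ht
    rw [mu_length] at this
    simp only [List.length_cons] at this
    omega

theorem shift_append (c : Bool) (x y s t : List Bool) (hx : c :: x = mu s ++ [c])
    (hy : c :: y = mu t ++ [c]) : c :: (x ++ y) = mu (s ++ t) ++ [c] := by
  rw [← List.cons_append, hx, mu_append, List.append_assoc, List.append_assoc, ← hy]
  rfl

theorem main_ind (n : ℕ) : ∀ x y : List Bool, x.length + y.length ≤ n → x ≠ [] → y ≠ [] →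
    ¬ PB (gd (bigW x y)) 1 (bigW x y).length →
    ∃ k b, x = mu^[k] [b] ∧ y = mu^[k] [!b] := by
  induction n with
  | zero =>
    intro x y hn hx
    have hx0 : 0 < x.length := List.length_pos_of_ne_nil hx
    omega
  | succ n ih =>
    intro x y hn hx hy hW
    have hx0 : 0 < x.length := List.length_pos_of_ne_nil hx
    have hy0 : 0 < y.length := List.length_pos_of_ne_nil hy
    by_cases hshort : x.length ≤ 5 ∧ y.length ≤ 5
    · have h1 := short_check
      rw [List.all_eq_true] at h1
      have h2 := h1 x (mem_shortWords x hx hshort.1)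
      rw [Bool.or_eq_true] at h2
      rcases h2 with h2 | h2
      · exact (hW (hasPow_mid _ (x ++ (y ++ (y ++ (x ++ y)))) (x ++ x) y (by simp [bigW])
          (by simp [hx]) h2)).elim
      rw [List.all_eq_true] at h2
      have h3 := h2 y (mem_shortWords y hy hshort.2)
      rw [Bool.or_eq_true, Bool.or_eq_true, Bool.or_eq_true, Bool.or_eq_true] at h3
      rcases h3 with h3 | h3 | h3 | h3 | h3
      · exact (hW (hasPow_mid _ x (y ++ y) (x ++ (y ++ (x ++ (x ++ y)))) (by simp [bigW]) hx h3)).elim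
      · exact (hW (hasPow_mid _ (x ++ (y ++ (y ++ (x ++ y)))) (x ++ (x ++ y)) [] (by simp [bigW])
          (by simp [hx]) h3)).elim
      · exact (hW (hasPow_mid _ x (y ++ (y ++ x)) (y ++ (x ++ (x ++ y))) (by simp [bigW]) hx h3)).elim
      · obtain ⟨a, l, hal⟩ : ∃ a l, bigW x y = a :: l := by
          cases hb : bigW x y with
          | nil => have := bigW_length x y; rw [hb] at this; simp at this; omega
          | cons a l => exact ⟨a, l, rfl⟩
        exact (hW (hasPow_mid _ [a] (bigW x y).tail [] (by simp [hal]) (by simp) h3)).elim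
      · simp only [okPair, Bool.or_eq_true, Bool.and_eq_true, beq_iff_eq] at h3
        rcases h3 with ((((⟨h, h'⟩ | ⟨h', h⟩) | ⟨h, h'⟩) | ⟨h', h⟩) | ⟨h, h'⟩) | ⟨h', h⟩
        · exact ⟨0, false, h, h'⟩
        · exact ⟨0, true, h, h'⟩
        · exact ⟨1, false, h, h'⟩
        · exact ⟨1, true, h, h'⟩
        · exact ⟨2, false, h, h'⟩
        · exact ⟨2, true, h, h'⟩
    · obtain ⟨hxe, hye, e, he, halt⟩ := long_even x y hx hy (by omega) hW
      obtain ⟨X1, X2, X3, Y1, Y2, Y3, Y4⟩ := bigW_facts x y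
      obtain ⟨p, hp⟩ : ∃ p, x.length = 2 * (p + 1) := ⟨x.length / 2 - 1, by omega⟩
      obtain ⟨q, hq⟩ : ∃ q, y.length = 2 * (q + 1) := ⟨y.length / 2 - 1, by omega⟩
      obtain rfl | rfl : e = 0 ∨ e = 1 := by omega
      · obtain ⟨s, hs⟩ := mu_of_pairs (p + 1) x hp (by
          intro i hi
          have := halt (2 * x.length + 3 * y.length + 2 * i) (by omega) (by omega) (by omega)
          rwa [X2 _ (by omega), add_assoc, X2 _ (by omega)] at this)
        obtain ⟨t, ht⟩ := mu_of_pairs (q + 1) y hq (by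
          intro i hi
          have := halt (x.length + y.length + 2 * i) (by omega) (by omega) (by omega)
          rwa [Y2 _ (by omega), add_assoc, Y2 _ (by omega)] at this)
        have hsl := mu_length s
        have htl := mu_length t
        rw [← hs] at hsl
        rw [← ht] at htl
        obtain ⟨k, b, h1, h2⟩ := ih s t (by omega) (by rintro rfl; simp at hsl; exact hx hsl)
          (by rintro rfl; simp at htl; exact hy htl) (by
            intro hPB
            apply hW
            rw [hs, ht, bigW_mu]
            exact PB_mu (bigW s t) _ 0 _ 0 (by omega) (by rw [mu_length]; omega)
              (by intro n _ _; rfl) hPB)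
        refine ⟨k + 1, b, ?_, ?_⟩
        · rw [Function.iterate_succ_apply', ← h1, hs]
        · rw [Function.iterate_succ_apply', ← h2, ht]
      · exfalso
        -- junctions
        have jxx : gd x (2 * p + 1) ≠ gd x 0 := by
          have := halt (2 * x.length + 3 * y.length + (2 * p + 1)) (by omega) (by omega) (by omega)
          rwa [X2 _ (by omega), show 2 * x.length + 3 * y.length + (2 * p + 1) + 1 =
            3 * x.length + 3 * y.length + 0 by omega, X3 _ (by omega)] at this
        have jxy : gd x (2 * p + 1) ≠ gd y 0 := by
          have := halt (3 * x.length + 3 * y.length + (2 * p + 1)) (by omega) (by omega) (by omega)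
          rwa [X3 _ (by omega), show 3 * x.length + 3 * y.length + (2 * p + 1) + 1 =
            4 * x.length + 3 * y.length + 0 by omega, Y4 _ (by omega)] at this
        have jyx : gd y (2 * q + 1) ≠ gd x 0 := by
          have := halt (x.length + y.length + (2 * q + 1)) (by omega) (by omega) (by omega)
          rwa [Y2 _ (by omega), show x.length + y.length + (2 * q + 1) + 1 =
            x.length + 2 * y.length + 0 by omega, X1 _ (by omega)] at this
        obtain ⟨c, hc⟩ : ∃ c, gd x (2 * p + 1) = c := ⟨_, rfl⟩
        rw [hc] at jxx jxy
        have hyc : gd y (2 * q + 1) = c := by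
          revert jxx jyx
          generalize gd y (2 * q + 1) = a
          generalize gd x 0 = b
          clear hc jxy
          revert a b c; decide
        obtain ⟨s, hs, hsl⟩ := shifted x c p hp jxx.symm hc (by
          intro o ho
          have := halt (2 * x.length + 3 * y.length + (2 * o + 1)) (by omega) (by omega) (by omega)
          rwa [X2 _ (by omega), add_assoc, X2 _ (by omega)] at this)
        obtain ⟨t, ht, htl⟩ := shifted y c q hq jxy.symm hyc (by
          intro o ho
          have := halt (x.length + y.length + (2 * o + 1)) (by omega) (by omega) (by omega)
          rwa [Y2 _ (by omega), add_assoc, Y2 _ (by omega)] at this)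
        have hbig : c :: bigW x y = mu (bigW s t) ++ [c] := by
          unfold bigW
          exact shift_append _ _ _ _ _ hs (shift_append _ _ _ _ _ ht (shift_append _ _ _ _ _ ht
            (shift_append _ _ _ _ _ hs (shift_append _ _ _ _ _ ht (shift_append _ _ _ _ _ hs
            (shift_append _ _ _ _ _ hs ht))))))
        obtain ⟨k, b, h1, h2⟩ := ih s t (by omega) (by rintro rfl; simp at hsl)
          (by rintro rfl; simp at htl) (by
            intro hPB
            apply hW
            refine PB_mu (bigW s t) _ 0 _ 1 (by omega) ?_ ?_ hPB
            · rw [bigW_length, bigW_length]; omega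
            · intro n hn1 hn2
              obtain ⟨m, rfl⟩ : ∃ m, n = m + 1 := ⟨n - 1, by omega⟩
              rw [Nat.add_sub_cancel, ← gd_cons_succ c, hbig, gd_left]
              rw [mu_length]; exact hn2)
        obtain ⟨s', hs'⟩ := gd_iter_zero k b
        obtain ⟨t', ht'⟩ := gd_iter_zero k (!b)
        rw [h1, hs', mu_cons] at hs
        rw [h2, ht', mu_cons] at ht
        simp only [List.cons_append, List.cons.injEq] at hs ht
        have e1 := hs.1
        have e2 := ht.1
        rw [e1] at e2
        cases b <;> simp at e2

/-! Morphisms. -/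

theorem morph_nil (h : List Bool → List Bool) (hm : IsMorphism h) : h [] = [] := by
  have := congrArg List.length (hm [] [])
  simp at this
  exact this

theorem morph_cons (h : List Bool → List Bool) (hm : IsMorphism h) (b : Bool) (l : List Bool) :
    h (b :: l) = h [b] ++ h l := hm [b] l

theorem morph_ext (h g : List Bool → List Bool) (hm : IsMorphism h) (gm : IsMorphism g)
    (h0 : h [false] = g [false]) (h1 : h [true] = g [true]) : h = g := by
  funext l
  induction l with
  | nil => rw [morph_nil h hm, morph_nil g gm]
  | cons b l ih => rw [morph_cons h hm, morph_cons g gm, ih]; cases b <;> simp [h0, h1]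

theorem morph_bigW (h : List Bool → List Bool) (hm : IsMorphism h) :
    h w01101001 = bigW (h [false]) (h [true]) := by
  simp only [w01101001, bigW]
  rw [morph_cons h hm false [true, true, false, true, false, false, true],
    morph_cons h hm true [true, false, true, false, false, true],
    morph_cons h hm true [false, true, false, false, true],
    morph_cons h hm false [true, false, false, true],
    morph_cons h hm true [false, false, true],
    morph_cons h hm false [false, true],
    morph_cons h hm false [true]]

theorem mu_iter_morph (k : ℕ) : IsMorphism (mu^[k]) := by
  induction k with
  | zero => intro x y; rfl
  | succ k ih =>
    intro x y
    rw [Function.iterate_succ_apply', Function.iterate_succ_apply', Function.iterate_succ_apply', ih,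
      mu_append]

theorem eMorph_append (x y : List Bool) : eMorph (x ++ y) = eMorph x ++ eMorph y := by
  simp [eMorph]

theorem eMu_iter_morph (k : ℕ) : IsMorphism (eMorph ∘ mu^[k]) := by
  intro x y
  simp only [Function.comp_apply]
  rw [mu_iter_morph k, eMorph_append]

theorem mu_eMorph (w : List Bool) : mu (eMorph w) = eMorph (mu w) := by
  induction w with
  | nil => rfl
  | cons b w ih =>
    have : eMorph (b :: w) = (!b) :: eMorph w := rfl
    rw [this, mu_cons, mu_cons, ih]
    rfl

theorem mu_iter_eMorph (k : ℕ) (w : List Bool) : mu^[k] (eMorph w) = eMorph (mu^[k] w) := by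
  induction k with
  | zero => rfl
  | succ k ih => rw [Function.iterate_succ_apply', Function.iterate_succ_apply', ih, mu_eMorph]

theorem wordPrefix_length (w : ℕ → Bool) (n : ℕ) : (wordPrefix w n).length = n := by
  simp [wordPrefix]

theorem wordPrefix_succ (w : ℕ → Bool) (n : ℕ) : wordPrefix w (n + 1) = wordPrefix w n ++ [w n] := by
  simp [wordPrefix, List.range_succ]

theorem wordPrefix_add (w : ℕ → Bool) (n m : ℕ) :
    wordPrefix w (n + m) = wordPrefix w n ++ wordPrefix (fun k => w (n + k)) m := by
  simp [wordPrefix, List.range_add]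

theorem mu_wordPrefix (w : ℕ → Bool) (n : ℕ) : mu (wordPrefix w n) = wordPrefix (muInf w) (2 * n) := by
  induction n with
  | zero => rfl
  | succ n ih =>
    rw [wordPrefix_succ, mu_append, ih, show 2 * (n + 1) = 2 * n + 1 + 1 by ring, wordPrefix_succ,
      wordPrefix_succ, muInf_even, muInf_odd, mu_cons, mu_nil]
    simp

theorem mu_iter_wordPrefix (k : ℕ) : ∀ (w : ℕ → Bool) (n : ℕ),
    mu^[k] (wordPrefix w n) = wordPrefix (muInf^[k] w) (2 ^ k * n) := by
  induction k with
  | zero => intro w n; simp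
  | succ k ih =>
    intro w n
    rw [Function.iterate_succ_apply', ih, mu_wordPrefix, Function.iterate_succ_apply']
    congr 1; ring

theorem muInf_iter_free (k : ℕ) (w : ℕ → Bool) (hw : ∀ N, ¬ PB w 0 N) :
    ∀ N, ¬ PB (muInf^[k] w) 0 N := by
  induction k with
  | zero => exact hw
  | succ k ih => rw [Function.iterate_succ_apply']; exact muInf_free _ ih

theorem compl_free (w : ℕ → Bool) (hw : ∀ N, ¬ PB w 0 N) : ∀ N, ¬ PB (fun n => !w n) 0 N := by
  rintro N ⟨i, P, L, h0, h1, h2, h3, h4⟩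
  refine hw N ⟨i, P, L, h0, h1, h2, h3, ?_⟩
  intro k hk
  simpa using h4 k hk

/-- If all images of prefixes of `w` are prefixes of `v`, the image of `w` is `v`. -/
theorem image_unique (h : List Bool → List Bool) (w u v : ℕ → Bool) (hu : IsMorphImage h w u)
    (hv : ∀ n, ∃ m, h (wordPrefix w n) = wordPrefix v m) : u = v := by
  funext j
  obtain ⟨n, hn⟩ := hu.2 (j + 1)
  have h1 := hu.1 n
  obtain ⟨m, hm⟩ := hv n
  rw [hm, wordPrefix_length] at h1
  rw [hm, wordPrefix_length] at hn
  rw [← gd_wordPrefix u m j hn, h1, gd_wordPrefix v m j hn]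

/-- A factor of the image of a prefix occurs in the image. -/
theorem image_factor (h : List Bool → List Bool) (w u : ℕ → Bool) (hu : IsMorphImage h w u)
    (hfree : ∀ N, ¬ PB u 0 N) (n : ℕ) (A z B : List Bool)
    (he : h (wordPrefix w n) = A ++ (z ++ B)) : ¬ PB (gd z) 0 z.length := by
  rintro ⟨i, P, L, h0, h1, h2, h3, h4⟩
  have hp := hu.1 n
  rw [he] at hp
  have hg : ∀ k, k < z.length → u (A.length + k) = gd z k := by
    intro k hk
    rw [← gd_wordPrefix u (A ++ (z ++ B)).length (A.length + k)
      (by simp only [List.length_append]; omega), hp, gd_right, gd_left _ _ _ hk]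
  refine hfree (A.length + i + L) ⟨A.length + i, P, L, by omega, h1, h2, le_refl _, ?_⟩
  intro k hk
  rw [add_assoc, add_assoc, hg _ (by omega), hg _ (by omega)]
  exact h4 k hk

theorem image_exists (h : List Bool → List Bool) (hm : IsMorphism h) (w : ℕ → Bool)
    (hunb : ∀ m : ℕ, ∃ n : ℕ, m ≤ (h (wordPrefix w n)).length) : ∃ u, IsMorphImage h w u := by
  choose N hN using hunb
  refine ⟨fun j => gd (h (wordPrefix w (N (j + 1)))) j, ?_, fun m => ⟨N m, hN m⟩⟩
  have mono : ∀ a b, a ≤ b → ∀ j, j < (h (wordPrefix w a)).length →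
      gd (h (wordPrefix w b)) j = gd (h (wordPrefix w a)) j := by
    intro a b hab j hj
    obtain ⟨d, rfl⟩ := Nat.exists_eq_add_of_le hab
    rw [wordPrefix_add, hm, gd_left _ _ _ hj]
  intro n
  apply gd_ext
  · rw [wordPrefix_length]
  · intro j hj
    rw [wordPrefix_length] at hj
    rw [gd_wordPrefix _ _ _ hj]
    have := hN (j + 1)
    rcases le_total n (N (j + 1)) with hl | hl
    · exact mono _ _ hl j hj
    · exact (mono _ _ hl j (by omega)).symm

theorem tm_pair_length (h : List Bool → List Bool) (hm : IsMorphism h) (h01 : h [false, true] ≠ [])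
    (n : ℕ) : n ≤ (h (wordPrefix tm (2 * n))).length := by
  induction n with
  | zero => omega
  | succ n ih =>
    have e1 : tm (2 * n) = tm n := by conv_lhs => rw [← tm_muInf, muInf_even]
    have e2 : tm (2 * n + 1) = !tm n := by conv_lhs => rw [← tm_muInf, muInf_odd]
    rw [show 2 * (n + 1) = 2 * n + 1 + 1 by ring, wordPrefix_succ, wordPrefix_succ, hm, hm, e1, e2]
    have h1 : 0 < (h [false]).length + (h [true]).length := by
      have := List.length_pos_of_ne_nil h01
      rw [morph_cons h hm, List.length_append] at this
      exact this
    simp only [List.length_append]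
    cases tm n <;> simp only [Bool.not_false, Bool.not_true] <;> omega

/-- If a letter is erased, the image is a power of the image of the other letter. -/
theorem erase_image (h : List Bool → List Bool) (hm : IsMorphism h) (b : Bool) (hb : h [b] = [])
    (l : List Bool) : h l = (List.replicate (l.count (!b)) (h [!b])).flatten := by
  induction l with
  | nil => rw [morph_nil h hm]; simp
  | cons a l ih =>
    rw [morph_cons h hm, ih]
    by_cases hab : a = b
    · subst hab
      rw [hb]
      cases a <;> simp
    · have : a = !b := by cases a <;> cases b <;> simp_all
      subst this
      simp [List.replicate_succ]

theorem count_ge (w : ℕ → Bool) (hw : ∀ N, ¬ PB w 0 N) (b : Bool) (n : ℕ) :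
    n ≤ (wordPrefix w (3 * n)).count b := by
  induction n with
  | zero => omega
  | succ n ih =>
    rw [show 3 * (n + 1) = 3 * n + 1 + 1 + 1 by ring, wordPrefix_succ, wordPrefix_succ, wordPrefix_succ,
      List.count_append, List.count_append, List.count_append]
    by_contra hcon
    have c0 : List.count b [w (3 * n)] = 0 := by omega
    have c1 : List.count b [w (3 * n + 1)] = 0 := by omega
    have c2 : List.count b [w (3 * n + 2)] = 0 := by omega
    simp only [List.count_eq_zero, List.mem_singleton] at c0 c1 c2
    refine hw (3 * n + 3) ⟨3 * n, 1, 3, by omega, by omega, by omega, by omega, ?_⟩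
    intro k hk
    obtain rfl | rfl : k = 0 ∨ k = 1 := by omega
    · rw [add_zero]
      clear ih hcon c2
      revert c0 c1
      generalize w (3 * n) = p
      generalize w (3 * n + 1) = q
      revert b p q; decide
    · clear ih hcon c0
      rw [show 3 * n + 1 + 1 = 3 * n + 2 by ring]
      revert c1 c2
      generalize w (3 * n + 1) = p
      generalize w (3 * n + 2) = q
      revert b p q; decide

theorem not_erasing (h : List Bool → List Bool) (hm : IsMorphism h) (h01 : h [false, true] ≠ [])
    (w u : ℕ → Bool) (hw : ∀ N, ¬ PB w 0 N) (hu : IsMorphImage h w u) (hfree : ∀ N, ¬ PB u 0 N)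
    (b : Bool) : h [b] ≠ [] := by
  intro hb
  have hb' : h [!b] ≠ [] := by
    intro h2
    apply h01
    rw [morph_cons h hm]
    cases b
    · simp only [Bool.not_false] at h2; rw [hb, h2]; rfl
    · simp only [Bool.not_true] at h2; rw [hb, h2]; rfl
  have hc := count_ge w hw (!b) 3
  obtain ⟨d, hd⟩ := Nat.exists_eq_add_of_le hc
  have he := erase_image h hm b hb (wordPrefix w (3 * 3))
  rw [hd, List.replicate_add, List.flatten_append] at he
  refine image_factor h w u hu hfree (3 * 3) [] _ _ he ?_
  have hpos := List.length_pos_of_ne_nil hb'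
  refine ⟨0, (h [!b]).length, 3 * (h [!b]).length, le_refl _, hpos, by omega, ?_, ?_⟩
  · simp; omega
  · intro k hk
    have := gd_replicate_step 3 (h [!b]) [] (List.nil_prefix) k (by simpa using hk)
    simpa using this

/-- For a morphism `h` with `h(01) ≠ ε`, the following are equivalent:
(a) `h` is non-erasing and `h(01101001)` is `7/3`-power-free;
(b) `h = μ^k` or `h = E ∘ μ^k` for some `k ≥ 0`;
(c) `h` maps every infinite `7/3`-power-free word to an infinite `7/3`-power-free word;
(d) some infinite `7/3`-power-free word has `7/3`-power-free image under `h`. -/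
theorem power_free_morphism_tfae (h : List Bool → List Bool)
    (hmor : IsMorphism h) (h01 : h [false, true] ≠ []) :
    List.TFAE
      [ NonErasing h ∧ PowerFree (7/3 : ℝ) (h w01101001),
        ∃ k : ℕ, h = mu^[k] ∨ h = eMorph ∘ mu^[k],
        ∀ w u : ℕ → Bool, PowerFreeInf (7/3 : ℝ) w → IsMorphImage h w u →
          PowerFreeInf (7/3 : ℝ) u,
        ∃ w u : ℕ → Bool, PowerFreeInf (7/3 : ℝ) w ∧ IsMorphImage h w u ∧
          PowerFreeInf (7/3 : ℝ) u ] := by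
  have hab : (NonErasing h ∧ PowerFree (7/3 : ℝ) (h w01101001)) →
      ∃ k : ℕ, h = mu^[k] ∨ h = eMorph ∘ mu^[k] := by
    rintro ⟨⟨hx, hy⟩, hp⟩
    have hp' := powerFree_not_PB _ hp
    rw [morph_bigW h hmor] at hp'
    obtain ⟨k, b, h0, h1⟩ := main_ind _ (h [false]) (h [true]) (le_refl _) hx hy (by
      rintro ⟨i, P, L, h0, h1, h2, h3, h4⟩
      exact hp' ⟨i, P, L, by omega, h1, h2, h3, h4⟩)
    refine ⟨k, ?_⟩
    cases b
    · left
      exact morph_ext _ _ hmor (mu_iter_morph k) h0 h1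
    · right
      refine morph_ext _ _ hmor (eMu_iter_morph k) ?_ ?_
      · rw [h0, Function.comp_apply, ← mu_iter_eMorph]; rfl
      · rw [h1, Function.comp_apply, ← mu_iter_eMorph]; rfl
  have hbc : (∃ k : ℕ, h = mu^[k] ∨ h = eMorph ∘ mu^[k]) →
      ∀ w u : ℕ → Bool, PowerFreeInf (7/3 : ℝ) w → IsMorphImage h w u →
          PowerFreeInf (7/3 : ℝ) u := by
    rintro ⟨k, hk⟩ w u hw hu
    rw [powerFreeInf_iff] at hw ⊢
    rcases hk with hk | hk
    · have : u = muInf^[k] w := image_unique h w u _ hu (by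
        intro n
        exact ⟨2 ^ k * n, by rw [hk, mu_iter_wordPrefix]⟩)
      rw [this]
      exact muInf_iter_free k w hw
    · have : u = fun n => !(muInf^[k] w) n := image_unique h w u _ hu (by
        intro n
        refine ⟨2 ^ k * n, ?_⟩
        rw [hk, Function.comp_apply, mu_iter_wordPrefix]
        simp [eMorph, wordPrefix])
      rw [this]
      exact compl_free _ (muInf_iter_free k w hw)
  have hcd : (∀ w u : ℕ → Bool, PowerFreeInf (7/3 : ℝ) w → IsMorphImage h w u →
          PowerFreeInf (7/3 : ℝ) u) → ∃ w u : ℕ → Bool, PowerFreeInf (7/3 : ℝ) w ∧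
          IsMorphImage h w u ∧ PowerFreeInf (7/3 : ℝ) u := by
    intro hc
    have htm : PowerFreeInf (7/3 : ℝ) tm := (powerFreeInf_iff tm).2 tm_free
    obtain ⟨u, hu⟩ := image_exists h hmor tm fun m => ⟨2 * m, tm_pair_length h hmor h01 m⟩
    exact ⟨tm, u, htm, hu, hc tm u htm hu⟩
  have hda : (∃ w u : ℕ → Bool, PowerFreeInf (7/3 : ℝ) w ∧
          IsMorphImage h w u ∧ PowerFreeInf (7/3 : ℝ) u) →
          (NonErasing h ∧ PowerFree (7/3 : ℝ) (h w01101001)) := by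
    rintro ⟨w, u, hw, hu, hfree⟩
    rw [powerFreeInf_iff] at hw hfree
    refine ⟨⟨not_erasing h hmor h01 w u hw hu hfree false,
      not_erasing h hmor h01 w u hw hu hfree true⟩, ?_⟩
    apply not_PB_powerFree
    obtain ⟨i, hi⟩ := chk_sound w hw 23 [] (by simp) chk_true
    have he : wordPrefix w (i + 8) = wordPrefix w i ++ w01101001 := by
      rw [wordPrefix_add]
      congr 1
      apply gd_ext
      · rw [wordPrefix_length]; rfl
      · intro k hk
        rw [wordPrefix_length] at hk
        rw [gd_wordPrefix _ _ _ hk]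
        exact hi k hk
    refine image_factor h w u hu hfree (i + 8) (h (wordPrefix w i)) _ [] ?_
    rw [he, hmor, List.append_nil]
  tfae_have 1 → 2 := hab
  tfae_have 2 → 3 := hbc
  tfae_have 3 → 4 := hcd
  tfae_have 4 → 1 := hda
  tfae_finish
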